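/- ((q+1)th Power Law.) For every prime p, every real β > 0, and every f ∈ ℂ, the series Z(f, ℙ¹(ℚ_p), β) and Z(pf/(p+1), pℤ_p, β) converge absolutely and satisfy Z(f, ℙ¹(ℚ_p), β) = (Z(pf/(p+1), pℤ_p, β))^{p+1}. -/

import Mathlib

open MeasureTheory
open scoped LinearAlgebra.Projectivization

namespace LogCoulomb

noncomputable section

/-! ### The projective line over `ℚ_p`, its spherical metric and `PGL₂`-invariant measure -/

variable (p : ℕ) [Fact p.Prime]

instance : MeasurableSpace ℚ_[p] := borel _
instance : BorelSpace ℚ_[p] := ⟨rfl⟩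

/-- The projective line over `ℚ_p`. -/
abbrev P1 := ℙ ℚ_[p] (Fin 2 → ℚ_[p])

instance : TopologicalSpace (P1 p) :=
  inferInstanceAs (TopologicalSpace (Quotient _))

instance : MeasurableSpace (P1 p) := borel _
instance : BorelSpace (P1 p) := ⟨rfl⟩

/-- Spherical distance on homogeneous coordinates:
`δ((x₀,x₁),(y₀,y₁)) = |x₀y₁ - x₁y₀| / (max(|x₀|,|x₁|) ⬝ max(|y₀|,|y₁|))`. -/
def sdelta (x y : Fin 2 → ℚ_[p]) : ℝ :=
  ‖x 0 * y 1 - x 1 * y 0‖ / (max ‖x 0‖ ‖x 1‖ * max ‖y 0‖ ‖y 1‖)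

/-- The spherical metric on `ℙ¹(ℚ_p)`, defined via the canonical representatives. -/
def pdelta (ξ η : P1 p) : ℝ := sdelta p ξ.rep η.rep

open Classical in
/-- The action of a matrix on `ℙ¹(ℚ_p)`: `[x₀:x₁] ↦ [a x₀ + b x₁ : c x₀ + d x₁]`
(well-defined, and given by the first branch of the `if`, whenever `A` is invertible). -/
def mobius (A : Matrix (Fin 2) (Fin 2) ℚ_[p]) (ξ : P1 p) : P1 p :=
  if h : A.mulVec ξ.rep ≠ 0 then Projectivization.mk ℚ_[p] (A.mulVec ξ.rep) h else ξ

/-- `ν` is invariant under the action of `GL₂(ℤ_p)` on `ℙ¹(ℚ_p)`; membership of the matrix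
entries in `ℤ_p`, and invertibility of the matrix over `ℤ_p`, are phrased via the `p`-adic
norm on `ℚ_p`. -/
def IsGLInvariant (ν : Measure (P1 p)) : Prop :=
  ∀ A : Matrix (Fin 2) (Fin 2) ℚ_[p],
    (∀ i j, ‖A i j‖ ≤ 1) → ‖A.det‖ = 1 →
      ∀ M : Set (P1 p), MeasurableSet M → ν (mobius p A '' M) = ν M

/-- The embedding `ι : ℚ_p → ℙ¹(ℚ_p)`, `x ↦ [x : 1]`. -/
def iota (x : ℚ_[p]) : P1 p :=
  Projectivization.mk ℚ_[p] ![x, 1] (by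
    intro h
    have h1 := congrFun h 1
    simp at h1)

/-! ### Canonical partition functions -/

/-- The pairs `(i,j)` with `i < j`. -/
def pairs (N : ℕ) : Finset (Fin N × Fin N) := Finset.univ.filter fun q => q.1 < q.2

/-- The closed unit ball `ℤ_p = R` inside `ℚ_p`. -/
def Zball : Set ℚ_[p] := {x | ‖x‖ ≤ 1}

/-- The open unit ball `pℤ_p = P` inside `ℚ_p`. -/
def Pball : Set ℚ_[p] := {x | ‖x‖ < 1}

/-- The one-component canonical partition function
`Z_N(X, β) = ∫_{X^N} ∏_{i<j} |x_i - x_j|^β dμ^N` (as a Bochner integral, whether or not it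
converges absolutely). -/
def ZN (μ : Measure ℚ_[p]) [SigmaFinite μ] (X : Set ℚ_[p]) (N : ℕ) (β : ℂ) : ℂ :=
  ∫ x : Fin N → ℚ_[p], ∏ q ∈ pairs N, (‖x q.1 - x q.2‖ : ℂ) ^ β
    ∂(Measure.pi fun _ => μ.restrict X)

/-- The multivariate canonical partition function
`𝒵_I(X, s) = ∫_{X^I} ∏_{i<j, i,j ∈ I} |x_i - x_j|^{s_{ij}} dμ^I` for a subset `I ⊆ [N]`. -/
def ZI (μ : Measure ℚ_[p]) [SigmaFinite μ] (X : Set ℚ_[p]) {N : ℕ} (I : Finset (Fin N))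
    (s : Fin N → Fin N → ℂ) : ℂ :=
  ∫ x : I → ℚ_[p],
    ∏ q ∈ Finset.univ.filter (fun q : (↥I) × (↥I) => (q.1 : Fin N) < (q.2 : Fin N)),
      (‖x q.1 - x q.2‖ : ℂ) ^ s q.1.1 q.2.1
    ∂(Measure.pi fun _ => μ.restrict X)

/-- The multivariate canonical partition function
`𝒵_N(ℙ¹(ℚ_p), s) = ∫_{(ℙ¹(ℚ_p))^N} ∏_{i<j} δ(ξ_i,ξ_j)^{s_{ij}} dν^N`. -/
def ZP1s (ν : Measure (P1 p)) [SigmaFinite ν] (N : ℕ) (s : Fin N → Fin N → ℂ) : ℂ :=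
  ∫ x : Fin N → P1 p, ∏ q ∈ pairs N, ((pdelta p (x q.1) (x q.2) : ℝ) : ℂ) ^ s q.1 q.2
    ∂(Measure.pi fun _ => ν)

/-- The one-component canonical partition function `Z_N(ℙ¹(ℚ_p), β)`. -/
def ZP1 (ν : Measure (P1 p)) [SigmaFinite ν] (N : ℕ) (β : ℂ) : ℂ :=
  ∫ x : Fin N → P1 p, ∏ q ∈ pairs N, ((pdelta p (x q.1) (x q.2) : ℝ) : ℂ) ^ β
    ∂(Measure.pi fun _ => ν)

/-! ### The quadratic recurrence -/

/-- The factor `ρ_{N,k}(t,β)` appearing in the quadratic recurrence; here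
`N.choose 2 = N(N-1)/2`. -/
def rho (N k : ℕ) (t : ℝ) (β : ℂ) : ℂ :=
  if t = 0 then
    (((N : ℂ) + (N.choose 2 : ℂ) * β) * (1 - 2 * (k : ℂ) / (N : ℂ)) + 1) /
      (((N : ℂ) + (N.choose 2 : ℂ) * β) - 1)
  else
    Complex.sinh (((t : ℂ) / 2) * (((N : ℂ) + (N.choose 2 : ℂ) * β) * (1 - 2 * (k : ℂ) / (N : ℂ)) + 1)) /
      Complex.sinh (((t : ℂ) / 2) * (((N : ℂ) + (N.choose 2 : ℂ) * β) - 1))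

/-- The quadratic recurrence: `F 0 = F 1 = 1` and
`F N t β = ∑_{k=1}^{N-1} (k/N) ρ_{N,k}(t,β) F_{N-k}(t,β) F_k(t,β)` for `N ≥ 2`. -/
def F : ℕ → ℝ → ℂ → ℂ
  | 0, _, _ => 1
  | 1, _, _ => 1
  | N + 2, t, β =>
    ∑ k ∈ (Finset.Icc 1 (N + 1)).attach,
      (((k : ℕ) : ℂ) / ((N : ℂ) + 2)) * rho (N + 2) k t β *
        F (N + 2 - (k : ℕ)) t β * F (k : ℕ) t β
  decreasing_by
  all_goals
    have hk := Finset.mem_Icc.mp k.2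
    omega

/-! ### Splitting chains -/

/-- A splitting chain `Λ_0 > Λ_1 > ⋯ > Λ_L` of set partitions of the subset `I ⊆ [N]`,
beginning with the trivial partition `{I}` and ending with the partition of `I` into
singletons.  (The values `Λ ℓ` for `ℓ > L` are required to be `∅`, so that a chain is
determined by the genuine data `Λ_0, …, Λ_L`.) -/
structure SplChain (N : ℕ) (I : Finset (Fin N)) where
  L : ℕ
  Λ : ℕ → Finset (Finset (Fin N))
  nonempty_mem : ∀ ℓ ≤ L, ∀ B ∈ Λ ℓ, B.Nonempty
  subset_mem : ∀ ℓ ≤ L, ∀ B ∈ Λ ℓ, B ⊆ I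
  cover : ∀ ℓ ≤ L, ∀ i ∈ I, ∃! B, B ∈ Λ ℓ ∧ i ∈ B
  first : Λ 0 = {I}
  last : Λ L = I.image fun i => {i}
  refines : ∀ ℓ < L, ∀ B ∈ Λ (ℓ + 1), ∃ C ∈ Λ ℓ, B ⊆ C
  strict : ∀ ℓ < L, Λ (ℓ + 1) ≠ Λ ℓ
  trailing : ∀ ℓ, L < ℓ → Λ ℓ = ∅

variable {N : ℕ} {I : Finset (Fin N)}

/-- The branches of a splitting chain: the non-singleton parts,
`ℬ(𝔖) = (Λ_0 ∪ ⋯ ∪ Λ_{L-1}) \ Λ_L`. -/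
def SplChain.branches (S : SplChain N I) : Finset (Finset (Fin N)) :=
  ((Finset.range S.L).biUnion S.Λ) \ S.Λ S.L

/-- The depth `ℓ_𝔖(λ) = max {ℓ : λ ∈ Λ_ℓ}` of a branch. -/
def SplChain.depth (S : SplChain N I) (lam : Finset (Fin N)) : ℕ :=
  ((Finset.range (S.L + 1)).filter fun ℓ => lam ∈ S.Λ ℓ).sup id

/-- The degree `deg_𝔖(λ) = #{λ' ∈ Λ_{ℓ_𝔖(λ)+1} : λ' ⊆ λ}` of a branch. -/
def SplChain.degree (S : SplChain N I) (lam : Finset (Fin N)) : ℕ :=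
  ((S.Λ (S.depth lam + 1)).filter fun lam' => lam' ⊆ lam).card

/-- A splitting chain is reduced if every branch appears in exactly one partition of the
chain (namely the one at its depth). -/
def SplChain.Reduced (S : SplChain N I) : Prop :=
  ∀ lam ∈ S.branches, ∀ ℓ ≤ S.L, (lam ∈ S.Λ ℓ ↔ ℓ = S.depth lam)

/-- `e_λ(s) = #λ - 1 + ∑_{i<j, i,j ∈ λ} s_{ij}`. -/
def eexp (lam : Finset (Fin N)) (s : Fin N → Fin N → ℂ) : ℂ :=
  (lam.card : ℂ) - 1 + ∑ q ∈ (pairs N).filter fun q => q.1 ∈ lam ∧ q.2 ∈ lam, s q.1 q.2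

/-- Membership in `Ω_I`: `Re e_λ(s) > 0` for every `λ ⊆ I` with `#λ > 1`. -/
def InOmega (I : Finset (Fin N)) (s : Fin N → Fin N → ℂ) : Prop :=
  ∀ lam ⊆ I, 1 < lam.card → 0 < (eexp lam s).re


/-- The multivariate canonical partition function `𝒵_N(ℤ_p, s)` over `Fin N`-indexed tuples. -/
def ZNs (μ : Measure ℚ_[p]) [SigmaFinite μ] (X : Set ℚ_[p]) (N : ℕ)
    (s : Fin N → Fin N → ℂ) : ℂ :=
  ∫ x : Fin N → ℚ_[p], ∏ q ∈ pairs N, (‖x q.1 - x q.2‖ : ℂ) ^ s q.1 q.2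
    ∂(Measure.pi fun _ => μ.restrict X)

/-- The ball `p^v ℤ_p = {x : |x| ≤ p^{-v}}` in `ℚ_p`. -/
def pvball (v : ℤ) : Set ℚ_[p] := {x | ‖x‖ ≤ (p : ℝ) ^ (-v)}

/-- `G_N(q,β) = N! q^{(1/2)(N choose 2)β} F_N(log q, β)`. -/
def GN (N : ℕ) (β : ℂ) (q : ℝ) : ℂ :=
  (N.factorial : ℂ) * (q : ℂ) ^ ((N.choose 2 : ℂ) * β / 2) * F N (Real.log q) β

/-- `H_N(q,β)`, the efficient formula for `Z_N(ℙ¹(K),β)` as a function of `q`. -/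
def HN (N : ℕ) (β : ℂ) (q : ℝ) : ℂ :=
  (N.factorial : ℂ) * ∑ k ∈ Finset.range (N + 1),
    Complex.cosh (((Real.log q : ℂ) / 2) * ((N : ℂ) + (N.choose 2 : ℂ) * β) *
          (1 - 2 * (k : ℂ) / (N : ℂ))) /
        (2 * Complex.cosh ((Real.log q : ℂ) / 2)) ^ N *
      F (N - k) (Real.log q) β * F k (Real.log q) β

end

section General

open MeasureTheory Finset
open scoped ENNReal

variable {X : Type*} [MeasurableSpace X]

/-- product over ordered pairs of distinct indices -/
noncomputable def Gk (g : X → X → ℝ≥0∞) {ι : Type*} [Fintype ι] [DecidableEq ι] (x : ι → X) : ℝ≥0∞ :=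
  ∏ i, ∏ j, if i = j then 1 else g (x i) (x j)

/-- partition function -/
noncomputable def Wf (m : Measure X) (g : X → X → ℝ≥0∞) (ι : Type*) [Fintype ι] [DecidableEq ι] : ℝ≥0∞ :=
  ∫⁻ x : ι → X, Gk g x ∂(Measure.pi fun _ => m)

lemma measurable_Gk {g : X → X → ℝ≥0∞} (hg : Measurable (Function.uncurry g)) {ι : Type*} [Fintype ι]
    [DecidableEq ι] : Measurable (Gk g : (ι → X) → ℝ≥0∞) := by
  unfold Gk
  refine Finset.measurable_prod _ fun i _ => Finset.measurable_prod _ fun j _ => ?_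
  split_ifs
  · exact measurable_const
  · exact hg.comp (f := fun x : ι → X => (x i, x j)) ((measurable_pi_apply i).prodMk (measurable_pi_apply j))

lemma Wf_congr (m : Measure X) [SigmaFinite m] (g : X → X → ℝ≥0∞)
    {ι κ : Type*} [Fintype ι] [DecidableEq ι] [Fintype κ] [DecidableEq κ] (e : ι ≃ κ) :
    Wf m g ι = Wf m g κ := by
  unfold Wf
  have h := (measurePreserving_piCongrLeft (fun _ : κ => m) e).lintegral_map_equiv (Gk g)
  rw [h]
  refine lintegral_congr fun x => ?_
  unfold Gk
  refine Fintype.prod_equiv e _ _ fun i => Fintype.prod_equiv e _ _ fun j => ?_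
  simp [MeasurableEquiv.coe_piCongrLeft, Equiv.piCongrLeft_apply_apply]

lemma Wf_map {Y : Type*} [MeasurableSpace Y] (m : Measure X) (m' : Measure Y) [SigmaFinite m] [SigmaFinite m']
    {φ : X → Y} (hφ : MeasurePreserving φ m m') (g : Y → Y → ℝ≥0∞) (hg : Measurable (Function.uncurry g))
    {ι : Type*} [Fintype ι] [DecidableEq ι] :
    Wf m (fun x y => g (φ x) (φ y)) ι = Wf m' g ι := by
  unfold Wf
  rw [← (measurePreserving_pi (fun _ : ι => m) (fun _ => m') (fun _ => hφ)).lintegral_comp (measurable_Gk hg)]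
  rfl

lemma Wf_restrict_congr (m : Measure X) [SigmaFinite m] (A : Set X) (hA : MeasurableSet A)
    (g g' : X → X → ℝ≥0∞) (h : ∀ x ∈ A, ∀ y ∈ A, g x y = g' x y)
    {ι : Type*} [Fintype ι] [DecidableEq ι] :
    Wf (m.restrict A) g ι = Wf (m.restrict A) g' ι := by
  unfold Wf
  rw [← Measure.restrict_pi_pi (fun _ => m)]
  refine setLIntegral_congr_fun (MeasurableSet.univ_pi fun _ => hA) fun x hx => ?_
  unfold Gk
  have hx' : ∀ i, x i ∈ A := fun i => hx i trivial
  simp only [h _ (hx' _) _ (hx' _)]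

lemma Wf_smul (m : Measure X) [SigmaFinite m] (c : ℝ≥0∞) (hc : c ≠ ∞)
    (g : X → X → ℝ≥0∞) 
    {ι : Type*} [Fintype ι] [DecidableEq ι] :
    Wf (c • m) g ι = c ^ Fintype.card ι * Wf m g ι := by
  unfold Wf
  lift c to NNReal using hc
  have : SigmaFinite ((c : ℝ≥0∞) • m) := inferInstanceAs (SigmaFinite (c • m))
  have : (Measure.pi fun _ : ι => (c : ℝ≥0∞) • m) = ((c : ℝ≥0∞) ^ Fintype.card ι) • Measure.pi fun _ : ι => m := by
    refine Measure.pi_eq fun s hs => ?_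
    simp [Measure.pi_pi, Finset.prod_mul_distrib, Finset.card_univ]
  rw [this, lintegral_smul_measure, smul_eq_mul]

lemma Wf_le (m : Measure X) [SigmaFinite m] (g : X → X → ℝ≥0∞) (h : ∀ x y, g x y ≤ 1)
    {ι : Type*} [Fintype ι] [DecidableEq ι] :
    Wf m g ι ≤ m Set.univ ^ Fintype.card ι := by
  unfold Wf
  calc _ ≤ ∫⁻ x : ι → X, 1 ∂(Measure.pi fun _ => m) := by
        refine lintegral_mono fun x => ?_
        unfold Gk
        refine Finset.prod_le_one' fun i _ => Finset.prod_le_one' fun j _ => ?_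
        split_ifs
        · exact le_rfl
        · exact h _ _
    _ = _ := by
        rw [lintegral_one, Measure.pi_univ]; simp [Finset.card_univ]

lemma Gk_split (g : X → X → ℝ≥0∞) {A B : Set X}
    (h1 : ∀ x ∈ A, ∀ y ∈ B, g x y = 1) (h2 : ∀ x ∈ A, ∀ y ∈ B, g y x = 1)
    {ι : Type*} [Fintype ι] [DecidableEq ι] (P : ι → Prop) [DecidablePred P] (x : ι → X)
    (hx : ∀ i, x i ∈ if P i then A else B) :
    Gk g x = Gk g (fun i : {i // P i} => x i) * Gk g (fun i : {i // ¬ P i} => x i) := by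
  unfold Gk
  rw [← Fintype.prod_subtype_mul_prod_subtype (fun i => P i)]
  congr 1
  · refine Finset.prod_congr rfl fun i _ => ?_
    rw [← Fintype.prod_subtype_mul_prod_subtype (fun i => P i)]
    have hi := hx i
    rw [if_pos i.2] at hi
    have : (∏ j : {j // ¬ P j}, if (i : ι) = j then 1 else g (x i) (x j)) = 1 := by
      refine Finset.prod_eq_one fun j _ => ?_
      have hj := hx j
      rw [if_neg j.2] at hj
      split_ifs
      · rfl
      · exact h1 _ hi _ hj
    rw [this, mul_one]
    simp only [Subtype.ext_iff]
  · refine Finset.prod_congr rfl fun i _ => ?_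
    rw [← Fintype.prod_subtype_mul_prod_subtype (fun i => P i)]
    have hi := hx i
    rw [if_neg i.2] at hi
    have : (∏ j : {j // P j}, if (i : ι) = j then 1 else g (x i) (x j)) = 1 := by
      refine Finset.prod_eq_one fun j _ => ?_
      have hj := hx j
      rw [if_pos j.2] at hj
      split_ifs
      · rfl
      · exact h2 _ hj _ hi
    rw [this, one_mul]
    simp only [Subtype.ext_iff]

lemma Wf_piece (m : Measure X) [SigmaFinite m] (g : X → X → ℝ≥0∞) (hg : Measurable (Function.uncurry g))
    {A B : Set X} (hA : MeasurableSet A) (hB : MeasurableSet B)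
    (h1 : ∀ x ∈ A, ∀ y ∈ B, g x y = 1) (h2 : ∀ x ∈ A, ∀ y ∈ B, g y x = 1)
    {ι : Type*} [Fintype ι] [DecidableEq ι] (P : ι → Prop) [DecidablePred P] :
    ∫⁻ x in Set.univ.pi (fun i => if P i then A else B), Gk g x ∂(Measure.pi fun _ : ι => m)
      = Wf (m.restrict A) g (Fin (Fintype.card {i // P i})) * Wf (m.restrict B) g (Fin (Fintype.card {i // ¬ P i})) := by
  rw [← Wf_congr _ _ (Fintype.equivFin {i // P i}), ← Wf_congr _ _ (Fintype.equivFin {i // ¬ P i})]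
  have e := measurePreserving_piEquivPiSubtypeProd (fun i => m.restrict (if P i then A else B)) (fun i => P i)
  have h3 : ∫⁻ x in Set.univ.pi (fun i => if P i then A else B), Gk g x ∂(Measure.pi fun _ : ι => m)
     = ∫⁻ x in Set.univ.pi (fun i => if P i then A else B), 
        (fun z : ({i // P i} → X) × ({i // ¬ P i} → X) => Gk g z.1 * Gk g z.2)
          (MeasurableEquiv.piEquivPiSubtypeProd (fun _ => X) (fun i => P i) x) ∂(Measure.pi fun _ : ι => m) := by
    refine setLIntegral_congr_fun (MeasurableSet.univ_pi fun i => ?_) fun x hx => ?_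
    · split_ifs <;> assumption
    · exact Gk_split g h1 h2 P x (fun i => hx i trivial)
  have hm : Measurable (fun z : ({i // P i} → X) × ({i // ¬ P i} → X) => Gk g z.1 * Gk g z.2) :=
    ((measurable_Gk hg).comp measurable_fst).mul ((measurable_Gk hg).comp measurable_snd)
  rw [h3, Measure.restrict_pi_pi, e.lintegral_comp hm]
  rw [lintegral_prod_mul (measurable_Gk hg).aemeasurable (measurable_Gk hg).aemeasurable]
  unfold Wf
  congr 3
  · congr 1
    funext i
    rw [if_pos i.2]
  · congr 1
    funext i
    rw [if_neg i.2]

lemma Wf_union (m : Measure X) [SigmaFinite m] (g : X → X → ℝ≥0∞) (hg : Measurable (Function.uncurry g))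
    {A B : Set X} (hA : MeasurableSet A) (hB : MeasurableSet B) (hAB : Disjoint A B)
    (h1 : ∀ x ∈ A, ∀ y ∈ B, g x y = 1) (h2 : ∀ x ∈ A, ∀ y ∈ B, g y x = 1) (N : ℕ) :
    Wf (m.restrict (A ∪ B)) g (Fin N) = ∑ k ∈ Finset.range (N + 1),
      N.choose k • (Wf (m.restrict A) g (Fin k) * Wf (m.restrict B) g (Fin (N - k))) := by
  have h0 : (Set.univ.pi fun _ : Fin N => A ∪ B) =
      ⋃ S ∈ (Finset.univ : Finset (Fin N)).powerset, Set.univ.pi (fun i => if i ∈ S then A else B) := by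
    ext x
    simp only [Set.mem_univ_pi, Set.mem_iUnion, exists_prop, Finset.powerset_univ, Finset.mem_univ, true_and]
    constructor
    · intro h
      classical
      refine ⟨Finset.univ.filter fun i => x i ∈ A, fun i => ?_⟩
      simp only [Finset.mem_filter, Finset.mem_univ, true_and]
      split_ifs with hi
      · exact hi
      · exact (h i).resolve_left hi
    · rintro ⟨S, hS⟩ i
      have := hS i
      split_ifs at this
      · exact Or.inl this
      · exact Or.inr this
  have hd : Set.PairwiseDisjoint (↑((Finset.univ : Finset (Fin N)).powerset) : Set (Finset (Fin N)))
      (fun S => Set.univ.pi (fun i => if i ∈ S then A else B)) := by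
    intro S _ T _ hST
    rw [Function.onFun, Set.disjoint_left]
    intro x hx hy
    apply hST
    ext i
    have h3 := hx i trivial
    have h4 := hy i trivial
    by_cases hi : i ∈ S <;> by_cases hj : i ∈ T <;> simp only [hi, hj, if_true, if_false] at h3 h4 ⊢
    · exact (Set.disjoint_left.1 hAB h3 h4).elim
    · exact (Set.disjoint_left.1 hAB h4 h3).elim
  conv_lhs => unfold Wf
  rw [← Measure.restrict_pi_pi (fun _ => m), h0, lintegral_biUnion_finset hd]
  · have := Finset.sum_powerset_apply_card (x := (Finset.univ : Finset (Fin N))) (fun k => Wf (m.restrict A) g (Fin k) * Wf (m.restrict B) g (Fin (N - k)))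
    rw [Finset.card_univ, Fintype.card_fin] at this
    rw [← this]
    refine Finset.sum_congr rfl fun S _ => ?_
    rw [Wf_piece m g hg hA hB h1 h2 (fun i => i ∈ S)]
    rw [Fintype.card_subtype_compl, Fintype.card_fin, Fintype.card_subtype]
    have e1 : (Finset.univ.filter fun i => i ∈ S) = S := by simp
    rw [e1, Fintype.card_coe]
  · intro S _
    refine MeasurableSet.univ_pi fun i => ?_
    split_ifs <;> assumption

/-- coefficients -/
noncomputable def Wc (m : Measure X) (g : X → X → ℝ≥0∞) (f : ℂ) (N : ℕ) : ℂ :=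
  ((Wf m g (Fin N)).toReal : ℂ) * f ^ N / (N.factorial : ℂ)

lemma Wc_summable (m : Measure X) [IsFiniteMeasure m] (g : X → X → ℝ≥0∞) (h : ∀ x y, g x y ≤ 1) (f : ℂ) :
    Summable fun N => ‖Wc m g f N‖ := by
  refine Summable.of_nonneg_of_le (fun _ => norm_nonneg _) (fun N => ?_)
    (Real.summable_pow_div_factorial ((m Set.univ).toReal * ‖f‖))
  unfold Wc
  rw [norm_div, norm_mul, norm_pow, Complex.norm_natCast, Complex.norm_real, mul_pow, Real.norm_of_nonneg ENNReal.toReal_nonneg]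
  gcongr
  rw [← ENNReal.toReal_pow]
  refine ENNReal.toReal_mono (ENNReal.pow_ne_top (measure_ne_top _ _)) ?_
  simpa using Wf_le m g h (ι := Fin N)

lemma Wf_ne_top (m : Measure X) [IsFiniteMeasure m] (g : X → X → ℝ≥0∞) (h : ∀ x y, g x y ≤ 1) (N : ℕ) :
    Wf m g (Fin N) ≠ ∞ :=
  ne_top_of_le_ne_top (ENNReal.pow_ne_top (measure_ne_top _ _)) (Wf_le m g h)

lemma Wc_union (m : Measure X) [IsFiniteMeasure m] (g : X → X → ℝ≥0∞) (hg : Measurable (Function.uncurry g))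
    (hle : ∀ x y, g x y ≤ 1)
    {A B : Set X} (hA : MeasurableSet A) (hB : MeasurableSet B) (hAB : Disjoint A B)
    (h1 : ∀ x ∈ A, ∀ y ∈ B, g x y = 1) (h2 : ∀ x ∈ A, ∀ y ∈ B, g y x = 1) (f : ℂ) :
    ∑' N, Wc (m.restrict (A ∪ B)) g f N = (∑' N, Wc (m.restrict A) g f N) * ∑' N, Wc (m.restrict B) g f N := by
  rw [tsum_mul_tsum_eq_tsum_sum_range_of_summable_norm (Wc_summable _ _ hle _) (Wc_summable _ _ hle _)]
  refine tsum_congr fun N => ?_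
  conv_lhs => rw [Wc, Wf_union m g hg hA hB hAB h1 h2]
  rw [ENNReal.toReal_sum]
  · push_cast
    rw [Finset.sum_mul, Finset.sum_div]
    refine Finset.sum_congr rfl fun k hk => ?_
    have hk : k ≤ N := by simpa [Nat.lt_succ_iff] using hk
    simp only [nsmul_eq_mul, ENNReal.toReal_mul, ENNReal.toReal_natCast, Wc]
    push_cast
    rw [Nat.cast_choose ℂ hk]
    have : f ^ N = f ^ k * f ^ (N - k) := by rw [← pow_add, Nat.add_sub_cancel' hk]
    rw [this]
    have a1 : (N.factorial : ℂ) ≠ 0 := by exact_mod_cast N.factorial_ne_zero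
    have a2 : (k.factorial : ℂ) ≠ 0 := by exact_mod_cast k.factorial_ne_zero
    have a3 : ((N - k).factorial : ℂ) ≠ 0 := by exact_mod_cast (N - k).factorial_ne_zero
    field_simp
  · intro k _
    rw [nsmul_eq_mul]
    exact ENNReal.mul_ne_top (ENNReal.natCast_ne_top _) (ENNReal.mul_ne_top (Wf_ne_top _ _ hle _) (Wf_ne_top _ _ hle _))

lemma Wc_empty (m : Measure X) [IsFiniteMeasure m] (g : X → X → ℝ≥0∞) (hle : ∀ x y, g x y ≤ 1) (f : ℂ) :
    ∑' N, Wc (m.restrict ∅) g f N = 1 := by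
  rw [tsum_eq_single 0]
  · simp [Wc, Wf, Gk]
  · intro N hN
    have := Wf_le (m.restrict ∅) g hle (ι := Fin N)
    simp [hN] at this
    simp [Wc, this]

lemma Wc_biUnion (m : Measure X) [IsFiniteMeasure m] (g : X → X → ℝ≥0∞) (hg : Measurable (Function.uncurry g))
    (hle : ∀ x y, g x y ≤ 1) (D : ℕ → Set X) (hD : ∀ k, MeasurableSet (D k)) (n : ℕ)
    (hdis : ∀ k < n, ∀ l < n, k ≠ l → Disjoint (D k) (D l))
    (h1 : ∀ k < n, ∀ l < n, k ≠ l → ∀ x ∈ D k, ∀ y ∈ D l, g x y = 1) (f : ℂ) :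
    ∀ j ≤ n, ∑' N, Wc (m.restrict (⋃ k ∈ Finset.range j, D k)) g f N =
      ∏ k ∈ Finset.range j, ∑' N, Wc (m.restrict (D k)) g f N := by
  intro j
  induction j with
  | zero => intro _; simpa using Wc_empty m g hle f
  | succ j ih =>
    intro hj
    rw [Finset.prod_range_succ, ← ih (by omega), Finset.range_add_one, Finset.set_biUnion_insert, Set.union_comm]
    refine Wc_union m g hg hle (Finset.measurableSet_biUnion _ fun k _ => hD k) (hD j) ?_ ?_ ?_ f
    · rw [Set.disjoint_iUnion₂_left]
      intro k hk
      have := Finset.mem_range.1 hk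
      exact hdis _ (by omega) _ (by omega) (by omega)
    · intro x hx y hy
      simp only [Set.mem_iUnion, Finset.mem_range, exists_prop] at hx
      obtain ⟨k, hk, hx⟩ := hx
      exact h1 k (by omega) j (by omega) (by omega) x hx y hy
    · intro x hx y hy
      simp only [Set.mem_iUnion, Finset.mem_range, exists_prop] at hx
      obtain ⟨k, hk, hx⟩ := hx
      exact h1 j (by omega) k (by omega) (by omega) y hy x hx

end General

section Padic

open Topology

variable (p : ℕ) [Fact p.Prime]

/-- nonzero vectors -/
abbrev NZ := {v : Fin 2 → ℚ_[p] // v ≠ 0}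

/-- the projection -/
noncomputable def prj : NZ p → P1 p := Projectivization.mk' ℚ_[p]

lemma prj_surj : Function.Surjective (prj p) := fun ξ =>
  ⟨⟨ξ.rep, ξ.rep_nonzero⟩, ξ.mk_rep⟩

lemma prj_quot : IsQuotientMap (prj p) := isQuotientMap_quot_mk

lemma prj_eq_iff (v w : NZ p) : prj p v = prj p w ↔ ∃ a : ℚ_[p]ˣ, a • w.1 = v.1 :=
  Projectivization.mk_eq_mk_iff _ _ _ v.2 w.2

lemma prj_oq : IsOpenQuotientMap (prj p) := by
  refine ⟨prj_surj p, (prj_quot p).continuous, fun U hU => ?_⟩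
  rw [← (prj_quot p).isOpen_preimage]
  have : prj p ⁻¹' (prj p '' U) = ⋃ a : ℚ_[p]ˣ, {v : NZ p | (⟨a • v.1, by
      rw [ne_eq, smul_eq_zero_iff_eq]; exact v.2⟩ : NZ p) ∈ U} := by
    ext v
    simp only [Set.mem_preimage, Set.mem_image, Set.mem_iUnion, Set.mem_ofPred_eq]
    constructor
    · rintro ⟨w, hw, h⟩
      obtain ⟨a, ha⟩ := (prj_eq_iff p w v).1 h
      exact ⟨a, by simpa only [ha] using hw⟩
    · rintro ⟨a, ha⟩
      exact ⟨_, ha, (prj_eq_iff p _ _).2 ⟨a, rfl⟩⟩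
  rw [this]
  refine isOpen_iUnion fun a => hU.preimage ?_
  refine Continuous.subtype_mk ?_ _
  exact (continuous_const_smul (a : ℚ_[p])).comp continuous_subtype_val

lemma p1_second : SecondCountableTopology (P1 p) :=
  (prj_quot p).secondCountableTopology (prj_oq p).isOpenMap

attribute [local instance] p1_second

lemma max_pos_of_ne (v : NZ p) : 0 < max ‖v.1 0‖ ‖v.1 1‖ := by
  by_contra h
  push Not at h
  obtain ⟨h0, h1⟩ := max_le_iff.1 h
  apply v.2
  ext i
  fin_cases i
  · simpa using h0
  · simpa using h1

lemma sdelta_smul (v w : Fin 2 → ℚ_[p]) (a b : ℚ_[p]ˣ) : sdelta p (a • v) (b • w) = sdelta p v w := by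
  have ha : ‖(a : ℚ_[p])‖ ≠ 0 := by simp
  have hb : ‖(b : ℚ_[p])‖ ≠ 0 := by simp
  unfold sdelta
  simp only [Pi.smul_apply, Units.smul_def, smul_eq_mul, norm_mul]
  rw [← mul_max_of_nonneg _ _ (norm_nonneg (a : ℚ_[p])), ← mul_max_of_nonneg _ _ (norm_nonneg (b : ℚ_[p]))]
  have : (a : ℚ_[p]) * v 0 * (b * w 1) - a * v 1 * (b * w 0) = a * b * (v 0 * w 1 - v 1 * w 0) := by ring
  rw [this, norm_mul, norm_mul, mul_mul_mul_comm]
  exact mul_div_mul_left _ _ (mul_ne_zero ha hb)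

lemma pdelta_prj (v w : NZ p) : pdelta p (prj p v) (prj p w) = sdelta p v.1 w.1 := by
  obtain ⟨a, ha⟩ := Projectivization.exists_smul_eq_mk_rep ℚ_[p] v.1 v.2
  obtain ⟨b, hb⟩ := Projectivization.exists_smul_eq_mk_rep ℚ_[p] w.1 w.2
  have h : pdelta p (prj p v) (prj p w) = sdelta p (Projectivization.mk ℚ_[p] v.1 v.2).rep (Projectivization.mk ℚ_[p] w.1 w.2).rep := rfl
  rw [h, ← ha, ← hb, sdelta_smul]

lemma pdelta_cont : Continuous (fun z : P1 p × P1 p => pdelta p z.1 z.2) := by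
  rw [← ((prj_oq p).prodMap (prj_oq p)).continuous_comp_iff]
  have : (fun z : P1 p × P1 p => pdelta p z.1 z.2) ∘ Prod.map (prj p) (prj p) =
      fun z : NZ p × NZ p => sdelta p z.1.1 z.2.1 := by
    ext z
    exact pdelta_prj p z.1 z.2
  rw [this]
  unfold sdelta
  have hc : ∀ i, Continuous fun v : NZ p => v.1 i := fun i => (continuous_apply i).comp continuous_subtype_val
  have h1 : ∀ i, Continuous fun z : NZ p × NZ p => z.1.1 i := fun i => (hc i).comp continuous_fst
  have h2 : ∀ i, Continuous fun z : NZ p × NZ p => z.2.1 i := fun i => (hc i).comp continuous_snd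
  refine Continuous.div ?_ ?_ fun z => ?_
  · exact (((h1 0).mul (h2 1)).sub ((h1 1).mul (h2 0))).norm
  · exact ((h1 0).norm.max (h1 1).norm).mul ((h2 0).norm.max (h2 1).norm)
  · exact (mul_pos (max_pos_of_ne p z.1) (max_pos_of_ne p z.2)).ne'

lemma pdelta_nonneg (x y : P1 p) : 0 ≤ pdelta p x y := by
  unfold pdelta sdelta; positivity

lemma sdelta_comm (x y : Fin 2 → ℚ_[p]) : sdelta p x y = sdelta p y x := by
  unfold sdelta
  rw [← norm_neg, mul_comm (max _ _)]
  congr 2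
  ring

lemma pdelta_comm (x y : P1 p) : pdelta p x y = pdelta p y x := sdelta_comm p _ _

lemma pdelta_self (x : P1 p) : pdelta p x x = 0 := by
  unfold pdelta sdelta
  simp [mul_comm]

lemma sdelta_le (x y : Fin 2 → ℚ_[p]) : sdelta p x y ≤ 1 := by
  unfold sdelta
  refine div_le_one_of_le₀ ?_ (by positivity)
  have h := Padic.nonarchimedean (x 0 * y 1) (-(x 1 * y 0))
  rw [← sub_eq_add_neg, norm_neg] at h
  refine h.trans ?_
  rw [norm_mul, norm_mul]
  refine max_le ?_ ?_
  · gcongr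
    · exact le_max_left _ _
    · exact le_max_right _ _
  · gcongr
    · exact le_max_right _ _
    · exact le_max_left _ _

lemma pdelta_le (x y : P1 p) : pdelta p x y ≤ 1 := sdelta_le p _ _

/-- matrix acting on nonzero vectors -/
noncomputable def actv (A : Matrix (Fin 2) (Fin 2) ℚ_[p]) (hA : A.det ≠ 0) (v : NZ p) : NZ p :=
  ⟨A.mulVec v.1, fun h => v.2 (Matrix.eq_zero_of_mulVec_eq_zero hA h)⟩

lemma mobius_prj (A : Matrix (Fin 2) (Fin 2) ℚ_[p]) (hA : A.det ≠ 0) (v : NZ p) :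
    mobius p A (prj p v) = prj p (actv p A hA v) := by
  have h : A.mulVec (prj p v).rep ≠ 0 := fun h =>
    (prj p v).rep_nonzero (Matrix.eq_zero_of_mulVec_eq_zero hA h)
  unfold mobius
  rw [dif_pos h]
  obtain ⟨a, ha⟩ := Projectivization.exists_smul_eq_mk_rep ℚ_[p] v.1 v.2
  have ha : a • v.1 = (prj p v).rep := ha
  refine (prj_eq_iff p ⟨_, h⟩ _).2 ⟨a, ?_⟩
  simp only [actv]
  rw [← ha, Units.smul_def, Units.smul_def, Matrix.mulVec_smul]

lemma mobius_cont (A : Matrix (Fin 2) (Fin 2) ℚ_[p]) (hA : A.det ≠ 0) : Continuous (mobius p A) := by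
  rw [(prj_quot p).continuous_iff]
  have : mobius p A ∘ prj p = prj p ∘ actv p A hA := funext fun v => mobius_prj p A hA v
  rw [this]
  refine (prj_quot p).continuous.comp (Continuous.subtype_mk ?_ _)
  exact Continuous.matrix_mulVec continuous_const continuous_subtype_val

lemma mobius_mul (A B : Matrix (Fin 2) (Fin 2) ℚ_[p]) (hA : A.det ≠ 0) (hAB : A * B = 1) (ξ : P1 p) :
    mobius p A (mobius p B ξ) = ξ := by
  have hB : B.det ≠ 0 := by
    intro h
    have := congrArg Matrix.det hAB
    simp [h] at this
  obtain ⟨v, rfl⟩ := prj_surj p ξ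
  rw [mobius_prj p B hB, mobius_prj p A hA]
  congr 1
  apply Subtype.ext
  simp only [actv, Matrix.mulVec_mulVec, hAB, Matrix.one_mulVec]

/-- integrality and invertibility, with inverse -/
structure Good (A B : Matrix (Fin 2) (Fin 2) ℚ_[p]) : Prop where
  int : ∀ i j, ‖A i j‖ ≤ 1
  det : ‖A.det‖ = 1
  det' : ‖B.det‖ = 1
  mul : A * B = 1
  mul' : B * A = 1
  max' : ∀ v : NZ p, max ‖(A.mulVec v.1) 0‖ ‖(A.mulVec v.1) 1‖ = max ‖v.1 0‖ ‖v.1 1‖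

lemma norm_one_ne {x : ℚ_[p]} (h : ‖x‖ = 1) : x ≠ 0 := by
  rintro rfl; simp at h

variable {p}

lemma Good.pdelta {A B : Matrix (Fin 2) (Fin 2) ℚ_[p]} (h : Good p A B) (x y : P1 p) :
    pdelta p (mobius p A x) (mobius p A y) = pdelta p x y := by
  obtain ⟨v, rfl⟩ := prj_surj p x
  obtain ⟨w, rfl⟩ := prj_surj p y
  rw [mobius_prj p A (norm_one_ne p h.det), mobius_prj p A (norm_one_ne p h.det), pdelta_prj, pdelta_prj]
  unfold sdelta
  simp only [actv]
  rw [h.max' v, h.max' w]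
  congr 1
  have : (A.mulVec v.1) 0 * (A.mulVec w.1) 1 - (A.mulVec v.1) 1 * (A.mulVec w.1) 0 = A.det * (v.1 0 * w.1 1 - v.1 1 * w.1 0) := by
    simp [Matrix.mulVec, dotProduct, Fin.sum_univ_two, Matrix.det_fin_two]
    ring
  rw [this, norm_mul, h.det, one_mul]

lemma Good.mp {A B : Matrix (Fin 2) (Fin 2) ℚ_[p]} (h : Good p A B) (ν : Measure (P1 p))
    (hν : IsGLInvariant p ν) : MeasurePreserving (mobius p A) ν ν := by
  have hm : Measurable (mobius p A) := (mobius_cont p A (norm_one_ne p h.det)).measurable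
  refine ⟨hm, Measure.ext fun M hM => ?_⟩
  rw [Measure.map_apply hm hM, ← hν A h.int h.det _ (hm hM), Set.image_preimage_eq]
  exact fun x => ⟨mobius p B x, mobius_mul p A B (norm_one_ne p h.det) h.mul x⟩

lemma Good.image {A B : Matrix (Fin 2) (Fin 2) ℚ_[p]} (h : Good p A B) (S : Set (P1 p)) :
    mobius p A '' S = mobius p B ⁻¹' S :=
  congrFun (Set.image_eq_preimage_of_inverse (mobius_mul p B A (norm_one_ne p h.det') h.mul')
    (mobius_mul p A B (norm_one_ne p h.det) h.mul)) S

lemma Good.inj {A B : Matrix (Fin 2) (Fin 2) ℚ_[p]} (h : Good p A B) : Function.Injective (mobius p A) :=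
  Function.LeftInverse.injective (mobius_mul p B A (norm_one_ne p h.det') h.mul')

lemma good_shift (b : ℚ_[p]) (hb : ‖b‖ ≤ 1) : Good p !![1, b; 0, 1] !![1, -b; 0, 1] where
  int i j := by fin_cases i <;> fin_cases j <;> simp [hb]
  det := by simp [Matrix.det_fin_two]
  det' := by simp [Matrix.det_fin_two]
  mul := by ext i j; fin_cases i <;> fin_cases j <;> simp [Matrix.mul_apply, Fin.sum_univ_two]
  mul' := by ext i j; fin_cases i <;> fin_cases j <;> simp [Matrix.mul_apply, Fin.sum_univ_two]
  max' v := by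
    simp [Matrix.mulVec, dotProduct, Fin.sum_univ_two]
    have hb1 : ‖b * v.1 1‖ ≤ ‖v.1 1‖ := by
      rw [norm_mul]; exact mul_le_of_le_one_left (norm_nonneg _) hb
    apply le_antisymm
    · refine max_le ?_ (le_max_right _ _)
      exact (Padic.nonarchimedean _ _).trans (max_le_max le_rfl hb1)
    · refine max_le ?_ (le_max_right _ _)
      have := Padic.nonarchimedean (v.1 0 + b * v.1 1) (-(b * v.1 1))
      rw [add_neg_cancel_right, norm_neg] at this
      exact this.trans (max_le_max le_rfl hb1)

lemma good_swap : Good p !![0, 1; 1, 0] !![0, 1; 1, 0] where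
  int i j := by fin_cases i <;> fin_cases j <;> simp
  det := by simp [Matrix.det_fin_two]
  det' := by simp [Matrix.det_fin_two]
  mul := by ext i j; fin_cases i <;> fin_cases j <;> simp [Matrix.mul_apply, Fin.sum_univ_two]
  mul' := by ext i j; fin_cases i <;> fin_cases j <;> simp [Matrix.mul_apply, Fin.sum_univ_two]
  max' v := by
    simp [Matrix.mulVec, dotProduct, Fin.sum_univ_two, max_comm]

variable (p)

/-- the ball around `[0:1]` -/
def D0 : Set (P1 p) := {ξ | ‖ξ.rep 0‖ < ‖ξ.rep 1‖}

lemma mem_D0 (v : NZ p) : prj p v ∈ D0 p ↔ ‖v.1 0‖ < ‖v.1 1‖ := by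
  obtain ⟨a, ha⟩ := Projectivization.exists_smul_eq_mk_rep ℚ_[p] v.1 v.2
  have ha : a • v.1 = (prj p v).rep := ha
  have hp : 0 < ‖(a : ℚ_[p])‖ := by simp
  unfold D0
  rw [Set.mem_ofPred_eq, ← ha]
  simp only [Pi.smul_apply, Units.smul_def, smul_eq_mul, norm_mul]
  exact mul_lt_mul_iff_right₀ hp

/-- transition matrices -/
noncomputable def Mk (k : ℕ) : Matrix (Fin 2) (Fin 2) ℚ_[p] :=
  if k < p then !![1, (k : ℚ_[p]); 0, 1] else !![0, 1; 1, 0]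

/-- inverse transition matrices -/
noncomputable def Mk' (k : ℕ) : Matrix (Fin 2) (Fin 2) ℚ_[p] :=
  if k < p then !![1, -(k : ℚ_[p]); 0, 1] else !![0, 1; 1, 0]

lemma norm_nat_le (k : ℕ) : ‖(k : ℚ_[p])‖ ≤ 1 := by
  simpa using Padic.norm_int_le_one (p := p) (k : ℤ)

lemma good_Mk (k : ℕ) : Good p (Mk p k) (Mk' p k) := by
  unfold Mk Mk'
  split_ifs
  · exact good_shift _ (norm_nat_le p k)
  · exact good_swap

/-- the `p+1` residue balls -/
noncomputable def Dk (k : ℕ) : Set (P1 p) := mobius p (Mk p k) '' D0 p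

lemma mem_Dk (k : ℕ) (hk : k < p) (v : NZ p) : prj p v ∈ Dk p k ↔ ‖v.1 0 - k * v.1 1‖ < ‖v.1 1‖ := by
  unfold Dk
  rw [(good_Mk p k).image, Set.mem_preimage, mobius_prj p _ (norm_one_ne p (good_Mk p k).det'), mem_D0]
  simp [actv, Mk', hk, Matrix.mulVec, dotProduct, Fin.sum_univ_two, sub_eq_add_neg]

lemma mem_Dp (v : NZ p) : prj p v ∈ Dk p p ↔ ‖v.1 1‖ < ‖v.1 0‖ := by
  unfold Dk
  rw [(good_Mk p p).image, Set.mem_preimage, mobius_prj p _ (norm_one_ne p (good_Mk p p).det'), mem_D0]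
  simp [actv, Mk', Matrix.mulVec, dotProduct, Fin.sum_univ_two]

lemma D0_open : IsOpen (D0 p) := by
  rw [← (prj_quot p).isOpen_preimage]
  have : prj p ⁻¹' D0 p = {v : NZ p | ‖v.1 0‖ < ‖v.1 1‖} := by
    ext v; exact mem_D0 p v
  rw [this]
  have hc : ∀ i, Continuous fun v : NZ p => v.1 i := fun i => (continuous_apply i).comp continuous_subtype_val
  exact isOpen_lt (hc 0).norm (hc 1).norm

lemma Dk_meas (k : ℕ) : MeasurableSet (Dk p k) := by
  unfold Dk
  rw [(good_Mk p k).image]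
  exact (mobius_cont p _ (norm_one_ne p (good_Mk p k).det')).measurable (D0_open p).measurableSet

lemma exists_res (x : ℚ_[p]) (hx : ‖x‖ ≤ 1) : ∃ n : ℕ, n < p ∧ ‖x - n‖ < 1 := by
  obtain ⟨z, rfl⟩ : ∃ z : ℤ_[p], (z : ℚ_[p]) = x := ⟨⟨x, hx⟩, rfl⟩
  obtain ⟨n, hn, h⟩ := PadicInt.exists_mem_range (p := p) z
  refine ⟨n, hn, ?_⟩
  rw [IsLocalRing.mem_maximalIdeal, PadicInt.mem_nonunits, PadicInt.norm_def] at h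
  rw [PadicInt.coe_sub, PadicInt.coe_natCast] at h
  exact h

lemma Dk_cover : (⋃ k ∈ Finset.range (p + 1), Dk p k) = Set.univ := by
  refine Set.eq_univ_of_forall fun ξ => ?_
  obtain ⟨v, rfl⟩ := prj_surj p ξ
  simp only [Set.mem_iUnion, Finset.mem_range, exists_prop]
  by_cases h : ‖v.1 1‖ < ‖v.1 0‖
  · exact ⟨p, by omega, (mem_Dp p v).2 h⟩
  · push Not at h
    have h1 : 0 < ‖v.1 1‖ := by
      have := max_pos_of_ne p v
      rwa [max_eq_right h] at this
    have h1' : v.1 1 ≠ 0 := norm_pos_iff.1 h1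
    obtain ⟨n, hn, hlt⟩ := exists_res p (v.1 0 / v.1 1) (by rw [norm_div]; exact div_le_one_of_le₀ h h1.le)
    refine ⟨n, by omega, (mem_Dk p n hn v).2 ?_⟩
    have : v.1 0 - n * v.1 1 = (v.1 0 / v.1 1 - n) * v.1 1 := by field_simp
    rw [this, norm_mul]
    exact mul_lt_of_lt_one_left h1 hlt

lemma norm_sub_nat (k l : ℕ) (hk : k < p) (hl : l < p) (h : k ≠ l) : ‖(k : ℚ_[p]) - l‖ = 1 := by
  have h1 := Padic.norm_int_le_one (p := p) ((k : ℤ) - l)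
  have h2 := Padic.norm_intCast_lt_one_iff (p := p) (k := (k : ℤ) - l)
  push_cast at h1 h2
  refine le_antisymm h1 (not_lt.1 fun h3 => ?_)
  have := Int.eq_zero_of_abs_lt_dvd (h2.1 h3) (by rw [abs_lt]; omega)
  omega

lemma le_of_mem (k : ℕ) (a b : ℚ_[p]) (h : ‖a - k * b‖ < ‖b‖) : ‖a‖ ≤ ‖b‖ := by
  have := Padic.nonarchimedean (a - (k : ℚ_[p]) * b) ((k : ℚ_[p]) * b)
  rw [sub_add_cancel] at this
  refine this.trans (max_le h.le ?_)
  rw [norm_mul]; exact mul_le_of_le_one_left (norm_nonneg _) (norm_nat_le p k)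

lemma cross_aux (k : ℕ) (hk : k < p) (x y : P1 p) (hx : x ∈ Dk p k) (hy : y ∈ Dk p p) : pdelta p x y = 1 := by
  obtain ⟨v, rfl⟩ := prj_surj p x
  obtain ⟨w, rfl⟩ := prj_surj p y
  rw [mem_Dk p k hk] at hx
  rw [mem_Dp] at hy
  have hv := le_of_mem p k _ _ hx
  have hv1 : 0 < ‖v.1 1‖ := (norm_nonneg _).trans_lt hx
  have hw0 : 0 < ‖w.1 0‖ := (norm_nonneg _).trans_lt hy
  rw [pdelta_prj, sdelta, max_eq_right hv, max_eq_left hy.le]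
  have hlt : ‖v.1 0 * w.1 1‖ < ‖v.1 1 * w.1 0‖ := by
    rw [norm_mul, norm_mul]
    exact mul_lt_mul' hv hy (norm_nonneg _) hv1
  rw [sub_eq_add_neg, Padic.add_eq_max_of_ne (by rw [norm_neg]; exact hlt.ne), norm_neg, max_eq_right hlt.le, norm_mul]
  exact div_self (mul_pos hv1 hw0).ne'

lemma Dk_cross (k : ℕ) (hk : k < p + 1) (l : ℕ) (hl : l < p + 1) (hkl : k ≠ l) (x : P1 p) (hx : x ∈ Dk p k)
    (y : P1 p) (hy : y ∈ Dk p l) : pdelta p x y = 1 := by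
  rcases Nat.lt_succ_iff_lt_or_eq.1 hk with hk | hk
  · rcases Nat.lt_succ_iff_lt_or_eq.1 hl with hl | hl
    · obtain ⟨v, rfl⟩ := prj_surj p x
      obtain ⟨w, rfl⟩ := prj_surj p y
      rw [mem_Dk p k hk] at hx
      rw [mem_Dk p l hl] at hy
      have hv := le_of_mem p k _ _ hx
      have hw := le_of_mem p l _ _ hy
      have hv1 : 0 < ‖v.1 1‖ := (norm_nonneg _).trans_lt hx
      have hw1 : 0 < ‖w.1 1‖ := (norm_nonneg _).trans_lt hy
      rw [pdelta_prj, sdelta, max_eq_right hv, max_eq_right hw]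
      have e : v.1 0 * w.1 1 - v.1 1 * w.1 0 =
        ((v.1 0 - k * v.1 1) * w.1 1 + -(v.1 1 * (w.1 0 - l * w.1 1))) + ((k : ℚ_[p]) - l) * (v.1 1 * w.1 1) := by ring
      have h1 : ‖((k : ℚ_[p]) - l) * (v.1 1 * w.1 1)‖ = ‖v.1 1‖ * ‖w.1 1‖ := by
        rw [norm_mul, norm_sub_nat p k l hk hl hkl, norm_mul, one_mul]
      have h2 : ‖(v.1 0 - k * v.1 1) * w.1 1 + -(v.1 1 * (w.1 0 - l * w.1 1))‖ < ‖v.1 1‖ * ‖w.1 1‖ := by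
        refine (Padic.nonarchimedean _ _).trans_lt (max_lt ?_ ?_)
        · rw [norm_mul]; exact mul_lt_mul_of_pos_right hx hw1
        · rw [norm_neg, norm_mul]; exact mul_lt_mul_of_pos_left hy hv1
      rw [← h1] at h2
      rw [e, Padic.add_eq_max_of_ne h2.ne, max_eq_right h2.le, h1]
      exact div_self (mul_pos hv1 hw1).ne'
    · subst l
      exact cross_aux p k hk x y hx hy
  · subst k
    rw [pdelta_comm]
    exact cross_aux p l (by omega) y x hy hx

lemma Dk_disj (k : ℕ) (hk : k < p + 1) (l : ℕ) (hl : l < p + 1) (hkl : k ≠ l) : Disjoint (Dk p k) (Dk p l) := by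
  rw [Set.disjoint_left]
  intro x hx hy
  have := Dk_cross p k hk l hl hkl x hx x hy
  rw [pdelta_self] at this
  exact zero_ne_one this

end Padic

section PadicB

open Topology
open scoped ENNReal

variable (p : ℕ) [Fact p.Prime]

attribute [local instance] p1_second

/-- the vector of `iota` -/
noncomputable def iv (x : ℚ_[p]) : NZ p := ⟨![x, 1], by
    intro h
    have h1 := congrFun h 1
    simp at h1⟩

lemma iota_eq (x : ℚ_[p]) : iota p x = prj p (iv p x) := rfl

lemma iv_zero (x : ℚ_[p]) : (iv p x).1 0 = x := rfl
lemma iv_one (x : ℚ_[p]) : (iv p x).1 1 = 1 := rfl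

lemma prj_eq_iota (v : NZ p) (x : ℚ_[p]) : iota p x = prj p v ↔ v.1 1 ≠ 0 ∧ v.1 0 / v.1 1 = x := by
  rw [iota_eq, eq_comm, prj_eq_iff]
  constructor
  · rintro ⟨a, ha⟩
    have h0 := congrFun ha 0
    have h1 := congrFun ha 1
    simp only [Pi.smul_apply, Units.smul_def, smul_eq_mul, iv_zero, iv_one, mul_one] at h0 h1
    rw [← h0, ← h1]
    have := a.ne_zero
    exact ⟨this, by field_simp⟩
  · rintro ⟨h, rfl⟩
    refine ⟨Units.mk0 _ h, ?_⟩
    ext i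
    fin_cases i
    · simp [Units.smul_def, iv]; field_simp
    · simp [Units.smul_def, iv]

lemma iota_cont : Continuous (iota p) := by
  refine (prj_quot p).continuous.comp (g := prj p) (f := iv p) (Continuous.subtype_mk ?_ _)
  refine continuous_pi fun i => ?_
  fin_cases i
  · exact continuous_id
  · exact continuous_const

lemma iota_inj : Function.Injective (iota p) := by
  intro x y h
  rw [iota_eq p y, prj_eq_iota] at h
  simpa [iv_zero, iv_one] using h.2.symm

lemma iota_open : IsOpenMap (iota p) := by
  intro U hU
  rw [← (prj_quot p).isOpen_preimage]
  have : prj p ⁻¹' (iota p '' U) = {v : NZ p | v.1 1 ≠ 0 ∧ v.1 0 / v.1 1 ∈ U} := by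
    ext v
    simp only [Set.mem_preimage, Set.mem_image, prj_eq_iota, Set.mem_ofPred_eq]
    constructor
    · rintro ⟨x, hx, h, rfl⟩; exact ⟨h, hx⟩
    · rintro ⟨h, hx⟩; exact ⟨_, hx, h, rfl⟩
  rw [this]
  have hc : ∀ i, Continuous fun v : NZ p => v.1 i := fun i => (continuous_apply i).comp continuous_subtype_val
  have ho : IsOpen {v : NZ p | v.1 1 ≠ 0} := isOpen_ne_fun (hc 1) continuous_const
  have hd : ContinuousOn (fun v : NZ p => v.1 0 / v.1 1) {v : NZ p | v.1 1 ≠ 0} :=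
    (hc 0).continuousOn.div (hc 1).continuousOn fun v hv => hv
  exact hd.isOpen_inter_preimage ho hU

lemma iota_emb : MeasurableEmbedding (iota p) :=
  (IsOpenEmbedding.of_continuous_injective_isOpenMap (iota_cont p) (iota_inj p) (iota_open p)).measurableEmbedding

lemma iota_shift (b x : ℚ_[p]) (hb : ‖b‖ ≤ 1) : mobius p !![1, b; 0, 1] (iota p x) = iota p (b + x) := by
  rw [iota_eq, mobius_prj p _ (norm_one_ne p (good_shift b hb).det), eq_comm, prj_eq_iota]
  simp [actv, iv, Matrix.mulVec, dotProduct, Fin.sum_univ_two, add_comm]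

lemma iota_P : iota p '' Pball p = D0 p := by
  ext ξ
  obtain ⟨v, rfl⟩ := prj_surj p ξ
  rw [mem_D0]
  simp only [Set.mem_image, prj_eq_iota, Pball, Set.mem_ofPred_eq]
  constructor
  · rintro ⟨x, hx, h, rfl⟩
    rw [norm_div] at hx
    exact (div_lt_one (norm_pos_iff.2 h)).1 hx
  · intro h
    have h1 : 0 < ‖v.1 1‖ := (norm_nonneg _).trans_lt h
    exact ⟨_, by rw [norm_div]; exact (div_lt_one h1).2 h, norm_pos_iff.1 h1, rfl⟩

lemma iota_Z : iota p '' Zball p = (Dk p p)ᶜ := by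
  ext ξ
  obtain ⟨v, rfl⟩ := prj_surj p ξ
  rw [Set.mem_compl_iff, mem_Dp, not_lt]
  simp only [Set.mem_image, prj_eq_iota, Zball, Set.mem_ofPred_eq]
  constructor
  · rintro ⟨x, hx, h, rfl⟩
    rw [norm_div] at hx
    exact (div_le_one (norm_pos_iff.2 h)).1 hx
  · intro h
    have h1 : 0 < ‖v.1 1‖ := by
      have := max_pos_of_ne p v
      rwa [max_eq_right h] at this
    exact ⟨_, by rw [norm_div]; exact (div_le_one h1).2 h, norm_pos_iff.1 h1, rfl⟩

lemma pdelta_iota (x y : ℚ_[p]) (hx : ‖x‖ ≤ 1) (hy : ‖y‖ ≤ 1) : pdelta p (iota p x) (iota p y) = ‖x - y‖ := by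
  rw [iota_eq, iota_eq, pdelta_prj, sdelta]
  simp [iv, hx, hy]

lemma nu_Dk (ν : Measure (P1 p)) (hν : IsGLInvariant p ν) (k : ℕ) : ν (Dk p k) = ν (D0 p) :=
  hν _ (good_Mk p k).int (good_Mk p k).det _ (D0_open p).measurableSet

lemma nu_D0 (ν : Measure (P1 p)) [IsProbabilityMeasure ν] (hν : IsGLInvariant p ν) :
    ν (D0 p) = ((p : ℝ≥0∞) + 1)⁻¹ := by
  have h : ν Set.univ = ∑ k ∈ Finset.range (p + 1), ν (Dk p k) := by
    rw [← Dk_cover p, measure_biUnion_finset]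
    · intro k hk l hl hkl
      exact Dk_disj p k (by simpa using hk) l (by simpa using hl) hkl
    · intro k _; exact Dk_meas p k
  simp only [nu_Dk p ν hν, measure_univ, Finset.sum_const, Finset.card_range, nsmul_eq_mul] at h
  push_cast at h
  exact ENNReal.eq_inv_of_mul_eq_one_left (by rw [mul_comm]; exact h.symm)

lemma nu_Z (ν : Measure (P1 p)) [IsProbabilityMeasure ν] (hν : IsGLInvariant p ν) :
    ν (iota p '' Zball p) = (p : ℝ≥0∞) / ((p : ℝ≥0∞) + 1) := by
  rw [iota_Z, prob_compl_eq_one_sub (Dk_meas p p), nu_Dk p ν hν, nu_D0 p ν hν]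
  have h1 : (p : ℝ≥0∞) + 1 ≠ 0 := by simp
  have h2 : (p : ℝ≥0∞) + 1 ≠ ∞ := by simp
  refine ENNReal.sub_eq_of_eq_add (by simp) ?_
  rw [div_eq_mul_inv, ← add_one_mul, ENNReal.mul_inv_cancel h1 h2]

/-- pulled back measure -/
noncomputable def mm (ν : Measure (P1 p)) : Measure ℚ_[p] := ν.comap (iota p)

lemma mm_apply (ν : Measure (P1 p)) (S : Set ℚ_[p]) : mm p ν S = ν (iota p '' S) :=
  (iota_emb p).comap_apply ν S

lemma mm_shift (ν : Measure (P1 p)) (hν : IsGLInvariant p ν) (b : ℚ_[p]) (hb : ‖b‖ ≤ 1) (S : Set ℚ_[p])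
    (hS : MeasurableSet S) : mm p ν ((fun x => b + x) '' S) = mm p ν S := by
  rw [mm_apply, mm_apply, ← hν _ (good_shift b hb).int (good_shift b hb).det _ ((iota_emb p).measurableSet_image.2 hS)]
  rw [Set.image_image, Set.image_image]
  simp only [iota_shift p b _ hb]

lemma mm_fin (ν : Measure (P1 p)) [IsFiniteMeasure ν] : IsFiniteMeasure (mm p ν) := by
  constructor
  rw [mm_apply]
  exact measure_lt_top _ _

attribute [local instance] mm_fin

/-- Borel -/
@[reducible] noncomputable def czMS : MeasurableSpace ℤ_[p] := borel _
attribute [local instance] czMS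

lemma czBS : BorelSpace ℤ_[p] := ⟨rfl⟩

attribute [local instance] czBS

/-- coercion -/
noncomputable def cz (z : ℤ_[p]) : ℚ_[p] := z

lemma coe_emb : MeasurableEmbedding (cz p) :=
  IsOpenEmbedding.measurableEmbedding (f := cz p) PadicInt.isOpenEmbedding_coe

lemma range_coe : Set.range (cz p) = Zball p := by
  ext x
  constructor
  · rintro ⟨z, rfl⟩; exact z.2
  · intro h; exact ⟨⟨x, h⟩, rfl⟩

lemma comap_inv (m : Measure ℚ_[p]) (hm : ∀ b : ℚ_[p], ‖b‖ ≤ 1 → ∀ S : Set ℚ_[p], MeasurableSet S → 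
    m ((fun x => b + x) '' S) = m S) : (m.comap (cz p)).IsAddLeftInvariant := by
  constructor
  intro g
  refine Measure.ext fun S hS => ?_
  rw [Measure.map_apply (measurable_const_add g) hS, (coe_emb p).comap_apply, (coe_emb p).comap_apply,
    ← hm (cz p g) g.2 _ ((coe_emb p).measurableSet_image.2 (measurable_const_add g hS)), Set.image_image]
  congr 1
  ext x
  constructor
  · rintro ⟨z, hz, rfl⟩
    exact ⟨g + z, hz, by simp [cz]⟩
  · rintro ⟨z, hz, rfl⟩
    exact ⟨-g + z, by simpa using hz, by simp [cz]⟩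

lemma haar_unique (μ : Measure ℚ_[p]) [μ.IsAddHaarMeasure] (hμ : μ (Zball p) = 1)
    (ν : Measure (P1 p)) [IsProbabilityMeasure ν] (hν : IsGLInvariant p ν) (S : Set ℚ_[p]) (hS : S ⊆ Zball p) :
    mm p ν S = ((p : ℝ≥0∞) / ((p : ℝ≥0∞) + 1)) * μ S := by
  have i1 := comap_inv p (mm p ν) (mm_shift p ν hν)
  have i2 := comap_inv p μ (fun b _ S _ => by
    rw [Set.image_add_left]; exact measure_preimage_add _ _ _)
  have f1 : IsFiniteMeasure ((mm p ν).comap (cz p)) := by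
    constructor
    rw [(coe_emb p).comap_apply]
    exact measure_lt_top _ _
  have hu : (μ.comap (cz p)) Set.univ = 1 := by
    rw [(coe_emb p).comap_apply, Set.image_univ, range_coe, hμ]
  have f2 : IsProbabilityMeasure (μ.comap (cz p)) := ⟨hu⟩
  have h2 : (μ.comap (cz p)).IsAddHaarMeasure :=
    Measure.isAddHaarMeasure_of_isCompact_nonempty_interior _ Set.univ isCompact_univ (by simp) (by simp) (by simp)
  have key := Measure.isAddInvariant_eq_smul_of_compactSpace ((mm p ν).comap (cz p)) (μ.comap (cz p))
  set c := Measure.addHaarScalarFactor ((mm p ν).comap (cz p)) (μ.comap (cz p))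
  have gen : ∀ S ⊆ Zball p, mm p ν S = c * μ S := by
    intro S hS
    have := congrArg (fun m => m ((cz p) ⁻¹' S)) key
    simp only [Measure.smul_apply, (coe_emb p).comap_apply] at this
    rw [Set.image_preimage_eq_inter_range, range_coe, Set.inter_eq_left.2 hS] at this
    rw [this, ENNReal.smul_def, smul_eq_mul]
  have hc := gen (Zball p) subset_rfl
  rw [hμ, mul_one, mm_apply, nu_Z p ν hν] at hc
  rw [gen S hS, hc]

lemma P_sub : Pball p ⊆ Zball p := fun x (h : ‖x‖ < 1) => show ‖x‖ ≤ 1 from h.le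

lemma P_meas : MeasurableSet (Pball p) :=
  (isOpen_lt continuous_norm continuous_const).measurableSet

lemma restrict_eq (μ : Measure ℚ_[p]) [μ.IsAddHaarMeasure] (hμ : μ (Zball p) = 1)
    (ν : Measure (P1 p)) [IsProbabilityMeasure ν] (hν : IsGLInvariant p ν) :
    (mm p ν).restrict (Pball p) = ((p : ℝ≥0∞) / ((p : ℝ≥0∞) + 1)) • μ.restrict (Pball p) := by
  refine Measure.ext fun S hS => ?_
  rw [Measure.restrict_apply hS, Measure.smul_apply, Measure.restrict_apply hS, smul_eq_mul]
  exact haar_unique p μ hμ ν hν _ (Set.inter_subset_right.trans (P_sub p))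

lemma iota_mp (ν : Measure (P1 p)) :
    MeasurePreserving (iota p) ((mm p ν).restrict (Pball p)) (ν.restrict (D0 p)) := by
  refine ⟨(iota_emb p).measurable, Measure.ext fun S hS => ?_⟩
  rw [Measure.map_apply (iota_emb p).measurable hS, Measure.restrict_apply ((iota_emb p).measurable hS),
    Measure.restrict_apply hS, mm_apply, Set.inter_comm, Set.image_inter_preimage, iota_P, Set.inter_comm]

/-- kernel -/
noncomputable def ker {X : Type*} (d : X → X → ℝ) (β : ℝ) (x y : X) : ℝ≥0∞ := ENNReal.ofReal (d x y ^ (β / 2))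

lemma Gk_ker {X : Type*} [MeasurableSpace X] (d : X → X → ℝ) (β : ℝ) (hβ : 0 < β) (h0 : ∀ x y, 0 ≤ d x y) (hs : ∀ x y, d x y = d y x)
    (N : ℕ) (x : Fin N → X) :
    Gk (ker d β) x = ENNReal.ofReal (∏ q ∈ pairs N, d (x q.1) (x q.2) ^ β) := by
  have e1 : ∀ i j : Fin N, (if i = j then 1 else ker d β (x i) (x j)) =
      (if i < j then ker d β (x i) (x j) else 1) * (if j < i then ker d β (x i) (x j) else 1) := by
    intro i j
    rcases lt_trichotomy i j with h | h | h
    · simp [h, h.ne, h.not_gt]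
    · simp [h]
    · simp [h, h.ne', h.not_gt]
  unfold Gk
  simp only [e1, Finset.prod_mul_distrib]
  rw [Finset.prod_comm (f := fun i j : Fin N => if j < i then ker d β (x i) (x j) else 1)]
  simp only [← Finset.prod_mul_distrib]
  rw [ENNReal.ofReal_prod_of_nonneg (fun q _ => Real.rpow_nonneg (h0 _ _) _), pairs, Finset.prod_filter,
    ← Finset.univ_product_univ, Finset.prod_product]
  refine Finset.prod_congr rfl fun i _ => Finset.prod_congr rfl fun j _ => ?_
  split_ifs with h
  · simp only [ker, hs (x j) (x i)]
    rw [← ENNReal.ofReal_mul (Real.rpow_nonneg (h0 _ _) _), ← Real.rpow_add_of_nonneg (h0 _ _) (by positivity) (by positivity)]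
    congr 2
    ring
  · simp

lemma ker_meas {X : Type*} [MeasurableSpace X] (d : X → X → ℝ) (β : ℝ) (hm : Measurable (Function.uncurry d)) :
    Measurable (Function.uncurry (ker d β)) := by
  have : Measurable fun z : X × X => ENNReal.ofReal (Function.uncurry d z ^ (β / 2)) := by fun_prop
  exact this

lemma int_eq {X : Type*} [MeasurableSpace X] (m : Measure X) [SigmaFinite m] (d : X → X → ℝ) (β : ℝ) (hβ : 0 < β) (h0 : ∀ x y, 0 ≤ d x y) (hs : ∀ x y, d x y = d y x)
    (hm : Measurable (Function.uncurry d)) (N : ℕ) :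
    (∫ x : Fin N → X, ∏ q ∈ pairs N, ((d (x q.1) (x q.2) : ℝ) : ℂ) ^ (β : ℂ) ∂(Measure.pi fun _ => m))
      = ((Wf m (ker d β) (Fin N)).toReal : ℂ) := by
  have e : ∀ x : Fin N → X, ∏ q ∈ pairs N, ((d (x q.1) (x q.2) : ℝ) : ℂ) ^ (β : ℂ) =
      ((∏ q ∈ pairs N, d (x q.1) (x q.2) ^ β : ℝ) : ℂ) := by
    intro x
    push_cast
    refine Finset.prod_congr rfl fun q _ => ?_
    rw [Complex.ofReal_cpow (h0 _ _)]
  simp only [e]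
  rw [integral_complex_ofReal, integral_eq_lintegral_of_nonneg_ae]
  · simp only [Wf, Gk_ker d β hβ h0 hs]
  · exact Filter.Eventually.of_forall fun x => Finset.prod_nonneg fun q _ => Real.rpow_nonneg (h0 _ _) _
  · refine Measurable.aestronglyMeasurable ?_
    refine Finset.measurable_prod _ fun q _ => ?_
    have : Measurable fun x : Fin N → X => Function.uncurry d (x q.1, x q.2) :=
      hm.comp ((measurable_pi_apply q.1).prodMk (measurable_pi_apply q.2))
    exact this.pow_const β

end PadicB

section Final

open scoped ENNReal

variable (p : ℕ) [Fact p.Prime]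

attribute [local instance] p1_second mm_fin

lemma kerP_meas (β : ℝ) : Measurable (Function.uncurry (ker (pdelta p) β)) :=
  ker_meas _ _ (pdelta_cont p).measurable

lemma kerP_le (β : ℝ) (hβ : 0 < β) (x y : P1 p) : ker (pdelta p) β x y ≤ 1 := by
  rw [ker, ← ENNReal.ofReal_one]
  exact ENNReal.ofReal_le_ofReal (Real.rpow_le_one (pdelta_nonneg p x y) (pdelta_le p x y) (by positivity))

lemma kerQ_meas : Measurable (Function.uncurry fun x y : ℚ_[p] => ‖x - y‖) := by
  have : Continuous fun z : ℚ_[p] × ℚ_[p] => ‖z.1 - z.2‖ := by fun_prop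
  exact this.measurable

lemma Wf_Dk (ν : Measure (P1 p)) [IsProbabilityMeasure ν] (hν : IsGLInvariant p ν) (β : ℝ) (k N : ℕ) :
    Wf (ν.restrict (Dk p k)) (ker (pdelta p) β) (Fin N) = Wf (ν.restrict (D0 p)) (ker (pdelta p) β) (Fin N) := by
  have h := ((good_Mk p k).mp ν hν).restrict_preimage (Dk_meas p k)
  rw [Dk, Set.preimage_image_eq _ (good_Mk p k).inj] at h
  rw [Dk, ← Wf_map _ _ h _ (kerP_meas p β)]
  congr 1
  funext x y
  simp only [ker, (good_Mk p k).pdelta]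

lemma Wf_D0 (μ : Measure ℚ_[p]) [μ.IsAddHaarMeasure] (hμ : μ (Zball p) = 1)
    (ν : Measure (P1 p)) [IsProbabilityMeasure ν] (hν : IsGLInvariant p ν) (β : ℝ) (N : ℕ) :
    Wf (ν.restrict (D0 p)) (ker (pdelta p) β) (Fin N) = ((p : ℝ≥0∞) / ((p : ℝ≥0∞) + 1)) ^ N *
      Wf (μ.restrict (Pball p)) (ker (fun x y : ℚ_[p] => ‖x - y‖) β) (Fin N) := by
  rw [← Wf_map _ _ (iota_mp p ν) _ (kerP_meas p β),
    Wf_restrict_congr (mm p ν) (Pball p) (P_meas p) _ (ker (fun x y : ℚ_[p] => ‖x - y‖) β), restrict_eq p μ hμ ν hν,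
    Wf_smul, Fintype.card_fin]
  · exact (ENNReal.div_lt_top (by simp) (by simp)).ne
  · intro x hx y hy
    simp only [ker, pdelta_iota p x y (P_sub p hx) (P_sub p hy)]

end Final

theorem statement_1 (p : ℕ) [Fact p.Prime]
    (μ : Measure ℚ_[p]) [SigmaFinite μ] [μ.IsAddHaarMeasure] (hμ : μ (Zball p) = 1)
    (ν : Measure (P1 p)) [IsProbabilityMeasure ν] (hν : IsGLInvariant p ν)
    (β : ℝ) (hβ : 0 < β) (f : ℂ) :
    Summable (fun N => ‖ZP1 p ν N (β : ℂ) * f ^ N / (N.factorial : ℂ)‖) ∧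
    Summable (fun N =>
      ‖ZN p μ (Pball p) N (β : ℂ) * ((p : ℂ) * f / ((p : ℂ) + 1)) ^ N / (N.factorial : ℂ)‖) ∧
    (∑' N, ZP1 p ν N (β : ℂ) * f ^ N / (N.factorial : ℂ)) =
      (∑' N, ZN p μ (Pball p) N (β : ℂ) * ((p : ℂ) * f / ((p : ℂ) + 1)) ^ N /
        (N.factorial : ℂ)) ^ (p + 1) := by
  have i2 := p1_second p
  have hc : ∀ N, ZP1 p ν N (β : ℂ) * f ^ N / (N.factorial : ℂ) = Wc ν (ker (pdelta p) β) f N := by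
    intro N
    rw [ZP1, int_eq ν (pdelta p) β hβ (pdelta_nonneg p) (pdelta_comm p) (pdelta_cont p).measurable, Wc]
  have hd : ∀ N, ZN p μ (Pball p) N (β : ℂ) * ((p : ℂ) * f / ((p : ℂ) + 1)) ^ N / (N.factorial : ℂ) =
      Wc (ν.restrict (D0 p)) (ker (pdelta p) β) f N := by
    intro N
    rw [ZN, int_eq (μ.restrict (Pball p)) (fun x y : ℚ_[p] => ‖x - y‖) β hβ (fun _ _ => norm_nonneg _)
      (fun _ _ => norm_sub_rev _ _) (kerQ_meas p), Wc, Wf_D0 p μ hμ ν hν]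
    have e : ((p : ENNReal) + 1).toReal = (p : ℝ) + 1 := by
      rw [ENNReal.toReal_add (by simp) (by simp)]; simp
    rw [ENNReal.toReal_mul, ENNReal.toReal_pow, ENNReal.toReal_div, e, ENNReal.toReal_natCast]
    push_cast
    rw [mul_div_right_comm (p : ℂ) f, mul_pow]
    ring
  simp only [hc, hd]
  refine ⟨(Wc_summable ν _ (kerP_le p β hβ) f), (Wc_summable _ _ (kerP_le p β hβ) f), ?_⟩
  have key := Wc_biUnion ν (ker (pdelta p) β) (kerP_meas p β) (kerP_le p β hβ) (Dk p) (Dk_meas p) (p + 1)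
    (Dk_disj p) (fun k hk l hl hkl x hx y hy => by
      rw [ker, Dk_cross p k hk l hl hkl x hx y hy, Real.one_rpow, ENNReal.ofReal_one]) f (p + 1) le_rfl
  rw [Dk_cover, Measure.restrict_univ] at key
  rw [key]
  have e : ∀ k N, Wc (ν.restrict (Dk p k)) (ker (pdelta p) β) f N =
      Wc (ν.restrict (D0 p)) (ker (pdelta p) β) f N := by
    intro k N
    rw [Wc, Wc, Wf_Dk p ν hν]
  simp only [e, Finset.prod_const, Finset.card_range]

end LogCoulomb
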